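/- The set 𝕍 of interval-values is closed under both shift operations: for all A, B ∈ 𝕍, Lshift(A,B) ∈ 𝕍 and Rshift(A,B) ∈ 𝕍. -/

import Mathlib

/-- An interval-value: a finite union of half-open intervals `[a, b)` with
`0 ≤ a < b ≤ 1`, regarded as a subset of `[0, 1)`. -/
def IsIntervalValue (A : Set ℝ) : Prop :=
  ∃ s : Finset (ℝ × ℝ),
    (∀ p ∈ s, 0 ≤ p.1 ∧ p.1 < p.2 ∧ p.2 ≤ 1) ∧
    A = ⋃ p ∈ s, Set.Ico p.1 p.2

open Classical in
/-- `Flength A`: the length of the first (left-most) component of `A`.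
For a nonempty interval-value `A` the first component is `[t, s)` where
`t = sInf A` and `s` is the supremum of those `x` with `[t, x) ⊆ A`;
`Flength ∅ = 0`. -/
noncomputable def Flength (A : Set ℝ) : ℝ :=
  if A.Nonempty then sSup {x : ℝ | Set.Ico (sInf A) x ⊆ A} - sInf A else 0

/-- `Lshift(A,B)(x) = A(x + Flength B)` if `0 ≤ x + Flength B < 1`, and `0`
otherwise (as characteristic functions on `[0,1)`). -/
noncomputable def Lshift (A B : Set ℝ) : Set ℝ :=
  {x : ℝ | x ∈ Set.Ico (0:ℝ) 1 ∧ 0 ≤ x + Flength B ∧ x + Flength B < 1 ∧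
    x + Flength B ∈ A}

/-- `Rshift(A,B)(x) = A(frac (x − Flength B))`, a circular right shift
(as characteristic functions on `[0,1)`). -/
noncomputable def Rshift (A B : Set ℝ) : Set ℝ :=
  {x : ℝ | x ∈ Set.Ico (0:ℝ) 1 ∧ Int.fract (x - Flength B) ∈ A}

/-!
Truncating a translate of `[a, b)` to `[0, 1)` gives again a half-open interval, possibly empty, so
translation by any real number followed by truncation preserves interval-values. Since `A` lies in
`[0, 1)`, the fractional part of `x + c` is in `A` exactly when `x + c + n` is in `A` for some
integer `n`; for `x` in `[0, 1)` this forces `⌊-c⌋ ≤ n ≤ ⌈-c⌉`, so a circular shift is a finite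
union of truncated translates.
-/

open Set

theorem fract_mem_iff_exists_add_intCast_mem {R : Type*} [Ring R] [LinearOrder R]
    [IsStrictOrderedRing R] [FloorRing R] {A : Set R} (hA : A ⊆ Ico 0 1) {x : R} :
    Int.fract x ∈ A ↔ ∃ n : ℤ, x + n ∈ A := by
  constructor
  · intro hx
    exact ⟨-⌊x⌋, by rwa [Int.cast_neg, ← sub_eq_add_neg]⟩
  · rintro ⟨n, hn⟩
    have fract_eq : Int.fract x = x + n := by
      rw [← Int.fract_add_intCast x n, Int.fract_eq_self]
      exact hA hn
    rwa [fract_eq]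

theorem isIntervalValue_empty : IsIntervalValue ∅ := ⟨∅, by simp⟩

theorem isIntervalValue_Ico {a b : ℝ} (ha : 0 ≤ a) (hb : b ≤ 1) : IsIntervalValue (Ico a b) := by
  rcases lt_or_ge a b with hab | hba
  · exact ⟨{(a, b)}, by simp [ha, hab, hb]⟩
  · simpa only [Ico_eq_empty_of_le hba] using isIntervalValue_empty

namespace IsIntervalValue

variable {A B : Set ℝ}

theorem union (hA : IsIntervalValue A) (hB : IsIntervalValue B) : IsIntervalValue (A ∪ B) := by
  classical
  obtain ⟨s, hs, rfl⟩ := hA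
  obtain ⟨t, ht, rfl⟩ := hB
  exact ⟨s ∪ t, Finset.forall_mem_union.2 ⟨hs, ht⟩, (Finset.set_biUnion_union s t _).symm⟩

theorem biUnion_finset {ι : Type*} {s : Finset ι} {f : ι → Set ℝ}
    (hf : ∀ i ∈ s, IsIntervalValue (f i)) : IsIntervalValue (⋃ i ∈ s, f i) := by
  classical
  induction s using Finset.induction_on with
  | empty => simpa using isIntervalValue_empty
  | insert i s _ ih =>
    rw [Finset.set_biUnion_insert]
    rw [Finset.forall_mem_insert] at hf
    exact hf.1.union (ih hf.2)

theorem subset_Ico (hA : IsIntervalValue A) : A ⊆ Ico 0 1 := by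
  obtain ⟨s, hs, rfl⟩ := hA
  exact iUnion₂_subset fun p hp => Ico_subset_Ico (hs p hp).1 (hs p hp).2.2

theorem Ico_inter_preimage_add_const (hA : IsIntervalValue A) (c : ℝ) :
    IsIntervalValue (Ico 0 1 ∩ (· + c) ⁻¹' A) := by
  obtain ⟨s, -, rfl⟩ := hA
  simp only [preimage_iUnion, inter_iUnion, preimage_add_const_Ico, Ico_inter_Ico]
  exact biUnion_finset fun p _ => isIntervalValue_Ico (le_max_left _ _) (min_le_left _ _)

theorem Ico_inter_preimage_fract_add_const (hA : IsIntervalValue A) (c : ℝ) :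
    IsIntervalValue (Ico 0 1 ∩ (fun x => Int.fract (x + c)) ⁻¹' A) := by
  have eq_biUnion : Ico 0 1 ∩ (fun x => Int.fract (x + c)) ⁻¹' A =
      ⋃ n ∈ Finset.Icc ⌊-c⌋ ⌈-c⌉, Ico 0 1 ∩ (· + (c + n)) ⁻¹' A := by
    ext x
    simp only [mem_inter_iff, mem_preimage, mem_iUnion, exists_prop, Finset.mem_Icc,
      fract_mem_iff_exists_add_intCast_mem hA.subset_Ico, ← add_assoc]
    constructor
    · rintro ⟨hx, n, hn⟩
      obtain ⟨hn₀, hn₁⟩ := hA.subset_Ico hn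
      have floor_le : ⌊-c⌋ ≤ n := Int.lt_add_one_iff.1 <| Int.floor_lt.2 <| by
        push_cast
        linarith [hx.2]
      have le_ceil : n ≤ ⌈-c⌉ := Int.sub_one_lt_iff.1 <| Int.lt_ceil.2 <| by
        push_cast
        linarith [hx.1]
      exact ⟨n, ⟨floor_le, le_ceil⟩, hx, hn⟩
    · rintro ⟨n, -, hx, hn⟩
      exact ⟨hx, n, hn⟩
  rw [eq_biUnion]
  exact biUnion_finset fun n _ => hA.Ico_inter_preimage_add_const (c + n)

end IsIntervalValue

theorem intervalValues_closed_under_shifts_general {A : Set ℝ} (hA : IsIntervalValue A) (c : ℝ) :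
    IsIntervalValue {x | x ∈ Ico 0 1 ∧ 0 ≤ x + c ∧ x + c < 1 ∧ x + c ∈ A} ∧
      IsIntervalValue {x | x ∈ Ico 0 1 ∧ Int.fract (x - c) ∈ A} := by
  refine ⟨?_, hA.Ico_inter_preimage_fract_add_const (-c)⟩
  have cutoff_iff (x : ℝ) : (0 ≤ x + c ∧ x + c < 1 ∧ x + c ∈ A) ↔ x + c ∈ A := by
    rw [← and_assoc]
    exact and_iff_right_of_imp fun hx => hA.subset_Ico hx
  simp only [cutoff_iff]
  exact hA.Ico_inter_preimage_add_const c

/-- `𝕍` is closed under both shift operations: for all interval-values `A, B`,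
both `Lshift(A,B)` and `Rshift(A,B)` are interval-values. -/
theorem intervalValues_closed_under_shifts (A B : Set ℝ)
    (hA : IsIntervalValue A) (hB : IsIntervalValue B) :
    IsIntervalValue (Lshift A B) ∧ IsIntervalValue (Rshift A B) :=
  intervalValues_closed_under_shifts_general hA (Flength B)
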